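/- arXiv:1609.00599 — 5 statements merged into one kernel-verified Lean document; each statement's English description precedes it below -/
import Mathlib

section
/- Let ρ > 0 and let α = (α₀, …, αₙ) : [0,T] → ℝ^{n+1} be continuous with S(t) := ∫₀^t e^{−ρ(t−s)} Σ_{j=0}^n α_j(s) ds. Suppose there is η = (η₀, …, ηₙ) ∈ ℝ^{n+1} such that γ_i α_i(t) + S(t) + ∫_t^T e^{ρ(t−s)} α_i(s) ds = η_i for all t ∈ [0,T] and all i. Then each α_i is continuously differentiable on [0,T] with dα_i/dt (t) = ρ α_i(t) − (1/γ_i) Σ_{j≠i} α_j(t) + (2ρ/γ_i) S(t) − ρ η_i / γ_i, and S is continuously differentiable with dS/dt (t) = Σ_{j=0}^n α_j(t) − ρ S(t). -/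
open MeasureTheory

/-- Variation-of-constants derivative on a closed interval. -/
theorem hasDerivWithinAt_exp_conv (T : ℝ) (hT : 0 < T) (k c : ℝ)
    (hc : c ∈ Set.Icc (0 : ℝ) T) (f : ℝ → ℝ) (hf : ContinuousOn f (Set.Icc 0 T))
    (t : ℝ) (ht : t ∈ Set.Icc (0 : ℝ) T) :
    HasDerivWithinAt (fun t => ∫ s in c..t, Real.exp (k * (t - s)) * f s)
      (f t + k * ∫ s in c..t, Real.exp (k * (t - s)) * f s) (Set.Icc 0 T) t := by
  obtain ⟨g, hg, hgf⟩ : ∃ g : ℝ → ℝ, Continuous g ∧ ∀ s ∈ Set.Icc (0 : ℝ) T, g s = f s :=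
    ⟨Set.IccExtend hT.le ((Set.Icc (0 : ℝ) T).domRestrict f),
      (continuousOn_iff_continuous_domRestrict.mp hf).Icc_extend',
      fun s hs => by rw [Set.IccExtend_of_mem hT.le _ hs]; rfl⟩
  have key : ∀ u ∈ Set.Icc (0 : ℝ) T, (∫ s in c..u, Real.exp (k * (u - s)) * f s)
      = Real.exp (k * u) * ∫ s in c..u, Real.exp (-(k * s)) * g s := by
    intro u hu
    rw [← intervalIntegral.integral_const_mul]
    refine intervalIntegral.integral_congr fun s hs => ?_
    have hs' : s ∈ Set.Icc (0 : ℝ) T := Set.ordConnected_Icc.uIcc_subset hc hu hs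
    rw [hgf s hs', ← mul_assoc, ← Real.exp_add]
    congr 2
    ring
  have hcg : Continuous fun s => Real.exp (-(k * s)) * g s := by fun_prop
  have h1 : HasDerivAt (fun u => ∫ s in c..u, Real.exp (-(k * s)) * g s)
      (Real.exp (-(k * t)) * g t) t :=
    hcg.integral_hasStrictDerivAt c t |>.hasDerivAt
  have h2 : HasDerivAt (fun u => Real.exp (k * u)) (Real.exp (k * t) * (k * 1)) t :=
    ((hasDerivAt_id t).const_mul k).exp
  have h3 := (h2.mul h1).hasDerivWithinAt (s := Set.Icc (0 : ℝ) T)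
  refine (h3.congr (fun u hu => key u hu) (key t ht)).congr_deriv ?_
  rw [key t ht, hgf t ht]
  have : Real.exp (k * t) * Real.exp (-(k * t)) = 1 := by
    rw [← Real.exp_add]; simp
  linear_combination (-f t) * (-this)

/-- Suppose `α = (α₀, …, αₙ)` is continuous on `[0,T]`,
`S(t) = ∫₀ᵗ e^{−ρ(t−s)} Σⱼ αⱼ(s) ds`, and the equilibrium optimality
conditions `γ_i α_i(t) + S(t) + ∫ₜᵀ e^{ρ(t−s)} α_i(s) ds = η_i` hold on
`[0,T]`. Then each `α_i` is continuously differentiable on `[0,T]` with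
`α_i' = ρ α_i − (1/γ_i) Σ_{j≠i} α_j + (2ρ/γ_i) S − ρ η_i/γ_i`,
and `S` is continuously differentiable with `S' = Σⱼ αⱼ − ρ S`. -/
theorem equilibrium_ode_exponential_kernel
    (T : ℝ) (hT : 0 < T) (n : ℕ)
    (γ : Fin (n + 1) → ℝ) (hγ : ∀ i, 0 < γ i)
    (ρ : ℝ) (hρ : 0 < ρ)
    (α : Fin (n + 1) → ℝ → ℝ)
    (hcont : ∀ i, ContinuousOn (α i) (Set.Icc 0 T))
    (S : ℝ → ℝ)
    (hS : ∀ t ∈ Set.Icc (0 : ℝ) T,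
      S t = ∫ s in (0:ℝ)..t, Real.exp (-ρ * (t - s)) * ∑ j, α j s)
    (η : Fin (n + 1) → ℝ)
    (hopt : ∀ t ∈ Set.Icc (0 : ℝ) T, ∀ i,
      γ i * α i t + S t + (∫ s in t..T, Real.exp (ρ * (t - s)) * α i s) = η i) :
    (∀ i, ∀ t ∈ Set.Icc (0 : ℝ) T,
        HasDerivWithinAt (α i)
          (ρ * α i t - (1 / γ i) * (∑ j ∈ Finset.univ.erase i, α j t)
            + (2 * ρ / γ i) * S t - ρ * η i / γ i)
          (Set.Icc 0 T) t) ∧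
      (∀ i, ContinuousOn
          (fun t => ρ * α i t - (1 / γ i) * (∑ j ∈ Finset.univ.erase i, α j t)
            + (2 * ρ / γ i) * S t - ρ * η i / γ i)
          (Set.Icc 0 T)) ∧
      (∀ t ∈ Set.Icc (0 : ℝ) T,
        HasDerivWithinAt S ((∑ j, α j t) - ρ * S t) (Set.Icc 0 T) t) ∧
      ContinuousOn (fun t => (∑ j, α j t) - ρ * S t) (Set.Icc 0 T) := by
  have hsum : ContinuousOn (fun s => ∑ j, α j s) (Set.Icc 0 T) :=
    continuousOn_finsetSum _ fun i _ => hcont i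
  have hSd : ∀ t ∈ Set.Icc (0 : ℝ) T,
      HasDerivWithinAt S ((∑ j, α j t) - ρ * S t) (Set.Icc 0 T) t := by
    intro t ht
    have h := hasDerivWithinAt_exp_conv T hT (-ρ) 0 ⟨le_rfl, hT.le⟩ _ hsum t ht
    refine (h.congr (fun u hu => hS u hu) (hS t ht)).congr_deriv ?_
    rw [hS t ht]
    ring
  have hSc : ContinuousOn S (Set.Icc 0 T) := fun t ht => (hSd t ht).continuousWithinAt
  refine ⟨?_, ?_, hSd, hsum.sub (continuousOn_const.mul hSc)⟩
  · intro i t ht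
    have h := hasDerivWithinAt_exp_conv T hT ρ T ⟨hT.le, le_rfl⟩ _ (hcont i) t ht
    have hne : γ i ≠ 0 := (hγ i).ne'
    have hα : ∀ u ∈ Set.Icc (0 : ℝ) T, α i u
        = (γ i)⁻¹ * ((∫ s in T..u, Real.exp (ρ * (u - s)) * α i s) - S u + η i) := by
      intro u hu
      have h1 := hopt u hu i
      rw [intervalIntegral.integral_symm] at h1
      rw [eq_inv_mul_iff_mul_eq₀ hne]
      linarith
    have h4 := ((h.sub (hSd t ht)).add_const (η i)).const_mul (γ i)⁻¹
    refine (h4.congr (fun u hu => hα u hu) (hα t ht)).congr_deriv ?_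
    have h1 := hopt t ht i
    rw [intervalIntegral.integral_symm] at h1
    have h5 : (∫ s in T..t, Real.exp (ρ * (t - s)) * α i s) = γ i * α i t + S t - η i := by
      linarith
    rw [h5, ← Finset.add_sum_erase Finset.univ (fun j => α j t) (Finset.mem_univ i)]
    field_simp
    ring
  · intro i
    have he : ContinuousOn (fun t => ∑ j ∈ Finset.univ.erase i, α j t) (Set.Icc 0 T) :=
      continuousOn_finsetSum _ fun j _ => hcont j
    exact (((continuousOn_const.mul (hcont i)).sub (continuousOn_const.mul he)).add
      (continuousOn_const.mul hSc)).sub continuousOn_const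
end

section
/- Let ρ > 0 and γ₀, …, γₙ > 0, and let M be the (n+2)×(n+2) real matrix with M_{ii} = ρ for 0 ≤ i ≤ n, M_{ij} = −1/γ_i for 0 ≤ i, j ≤ n with i ≠ j, M_{i,n+1} = 2ρ/γ_i for 0 ≤ i ≤ n, M_{n+1,j} = 1 for 0 ≤ j ≤ n, and M_{n+1,n+1} = −ρ. Then det M = −ρ (1 + Σ_{i=0}^n 1/(ργ_i + 1)) ∏_{i=0}^n (ρ + 1/γ_i); in particular det M ≠ 0, so M is invertible. -/
open Matrix

/-- The `(n+2)×(n+2)` matrix `M` with `M_{ii} = ρ` for `i ≤ n`,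
`M_{ij} = −1/γ_i` for `i ≠ j ≤ n`, `M_{i,n+1} = 2ρ/γ_i` for `i ≤ n`,
`M_{n+1,j} = 1` for `j ≤ n`, and `M_{n+1,n+1} = −ρ`. -/
noncomputable def Mmat (n : ℕ) (ρ : ℝ) (γ : Fin (n + 1) → ℝ) :
    Matrix (Fin (n + 2)) (Fin (n + 2)) ℝ := fun i j =>
  if hi : (i : ℕ) < n + 1 then
    if (j : ℕ) < n + 1 then
      if i = j then ρ else -1 / γ ⟨i, hi⟩
    else 2 * ρ / γ ⟨i, hi⟩
  else
    if (j : ℕ) < n + 1 then 1 else -ρ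

/-- The `(n+2)×(n+2)` matrix `N₁` with `(N₁)_{ii} = ργ_i` and `(N₁)_{i,n+1} = ρ`
for `i ≤ n`, `(N₁)_{n+1,j} = γ_j` for `j ≤ n`, `(N₁)_{n+1,n+1} = n+1`, and all
other entries `0`. -/
noncomputable def N1mat (n : ℕ) (ρ : ℝ) (γ : Fin (n + 1) → ℝ) :
    Matrix (Fin (n + 2)) (Fin (n + 2)) ℝ := fun i j =>
  if hi : (i : ℕ) < n + 1 then
    if (j : ℕ) < n + 1 then
      if i = j then ρ * γ ⟨i, hi⟩ else 0
    else ρ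
  else
    if hj : (j : ℕ) < n + 1 then γ ⟨j, hj⟩ else (n + 1 : ℝ)

/-- The `(n+1)×(n+2)` matrix `U` with `U_{ii} = γ_i`, `U_{i,n+1} = 1`
and all other entries `0`. -/
noncomputable def Umat (n : ℕ) (γ : Fin (n + 1) → ℝ) :
    Matrix (Fin (n + 1)) (Fin (n + 2)) ℝ := fun i j =>
  if (j : ℕ) < n + 1 then (if (i : ℕ) = (j : ℕ) then γ i else 0) else 1

/-- The `(n+1)×(n+2)` matrix `V` with `V_{ii} = ρ/γ_i` and all other
entries `0`. -/
noncomputable def Vmat (n : ℕ) (ρ : ℝ) (γ : Fin (n + 1) → ℝ) :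
    Matrix (Fin (n + 1)) (Fin (n + 2)) ℝ := fun i j =>
  if (i : ℕ) = (j : ℕ) then ρ / γ i else 0

/-- The `(n+1)×(n+2)` matrix `W` with `W_{ii} = 1` and all other entries `0`. -/
def Wmat (n : ℕ) : Matrix (Fin (n + 1)) (Fin (n + 2)) ℝ := fun i j =>
  if (i : ℕ) = (j : ℕ) then 1 else 0

/-- The vector `v = (0, …, 0, 1) ∈ ℝ^{n+2}`. -/
def vvec (n : ℕ) : Fin (n + 2) → ℝ := fun i =>
  if (i : ℕ) < n + 1 then 0 else 1

/-- `det M = −ρ (1 + Σᵢ 1/(ργ_i + 1)) ∏ᵢ (ρ + 1/γ_i)`;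
in particular `det M ≠ 0`, so `M` is invertible. -/
theorem Mmat_det (n : ℕ) (ρ : ℝ) (hρ : 0 < ρ)
    (γ : Fin (n + 1) → ℝ) (hγ : ∀ i, 0 < γ i) :
    (Mmat n ρ γ).det
        = -ρ * (1 + ∑ i, 1 / (ρ * γ i + 1)) * ∏ i, (ρ + 1 / γ i) ∧
      (Mmat n ρ γ).det ≠ 0 ∧ IsUnit (Mmat n ρ γ) := by
  have hdet : (Mmat n ρ γ).det
        = -ρ * (1 + ∑ i, 1 / (ρ * γ i + 1)) * ∏ i, (ρ + 1 / γ i) := by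
    have hρ0 : ρ ≠ 0 := hρ.ne'
    let A : Matrix (Fin (n + 1)) (Fin (n + 1)) ℝ :=
      Matrix.of fun i j => if i = j then ρ else -1 / γ i
    let B : Matrix (Fin (n + 1)) (Fin 1) ℝ := Matrix.of fun i _ => 2 * ρ / γ i
    let C : Matrix (Fin 1) (Fin (n + 1)) ℝ := Matrix.of fun _ _ => 1
    let D : Matrix (Fin 1) (Fin 1) ℝ := Matrix.diagonal fun _ => -ρ
    let E : Matrix (Fin 1) (Fin 1) ℝ := Matrix.diagonal fun _ => -ρ⁻¹
    have h1 : E * D = 1 := by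
      simp [E, D, hρ0]
    have h2 : D * E = 1 := by
      simp [E, D, hρ0]
    let I : Invertible D := ⟨E, h1, h2⟩
    have hI : ⅟D = E := rfl
    let e : Fin (n + 1) ⊕ Fin 1 ≃ Fin (n + 2) := finSumFinEquiv (m := n + 1) (n := 1)
    have hM : (Mmat n ρ γ).submatrix e e
        = Matrix.fromBlocks A B C D := by
      ext i j
      rcases i with i | i <;> rcases j with j | j
      · simp [Mmat, e, A, Fin.ext_iff, Nat.lt_succ_iff.mp i.2, Nat.lt_succ_iff.mp j.2]
      · simp [Mmat, e, B, Nat.lt_succ_iff.mp i.2]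
      · simp [Mmat, e, C, Nat.lt_succ_iff.mp j.2]
      · have : i = j := Subsingleton.elim _ _
        simp [Mmat, e, D, this]
    have hS : A - B * E * C = Matrix.diagonal (fun i => ρ + 1 / γ i) *
        (1 + Matrix.replicateCol (Fin 1) (fun i => 1 / (ρ * γ i + 1)) *
          Matrix.replicateRow (Fin 1) (fun _ => (1 : ℝ))) := by
      ext i j
      have hg := hγ i
      have hg0 := hg.ne'
      have hp : ρ * γ i + 1 ≠ 0 := by positivity
      rw [Matrix.diagonal_mul]
      simp only [Matrix.sub_apply, Matrix.add_apply, Matrix.mul_apply, Matrix.one_apply,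
        Matrix.replicateCol_apply, Matrix.replicateRow_apply, Fin.sum_univ_one,
        A, B, C, E, Matrix.of_apply, Matrix.diagonal_apply_eq]
      split_ifs <;> field_simp <;> ring
    rw [← Matrix.det_submatrix_equiv_self e (Mmat n ρ γ), hM,
      Matrix.det_fromBlocks₂₂, hI, hS, Matrix.det_mul, Matrix.det_diagonal,
      Matrix.det_diagonal, Matrix.det_one_add_mul_comm, Matrix.det_fin_one]
    simp only [Matrix.add_apply, Matrix.mul_apply, Matrix.one_apply_eq,
      Matrix.replicateCol_apply, Matrix.replicateRow_apply, Fin.prod_univ_one, one_mul]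
    ring
  have hne : (Mmat n ρ γ).det ≠ 0 := by
    rw [hdet]
    have hs : 0 ≤ ∑ i, 1 / (ρ * γ i + 1) :=
      Finset.sum_nonneg fun i _ => by have := hγ i; positivity
    have hp : 0 < ∏ i, (ρ + 1 / γ i) :=
      Finset.prod_pos fun i _ => by have := hγ i; positivity
    exact mul_ne_zero (mul_ne_zero (neg_ne_zero.mpr hρ.ne') (by positivity)) hp.ne'
  exact ⟨hdet, hne, (Matrix.isUnit_iff_isUnit_det _).mpr hne.isUnit⟩
end

section
/- Let ρ > 0 and γ₀, …, γₙ > 0, and define the (n+2)×(n+2) matrices M and N₁, the (n+1)×(n+2) matrices U and V, and the vector v = (0, …, 0, 1) ∈ ℝ^{n+2} as in the context. Then M − VᵀU is invertible with inverse (M − VᵀU)^{−1} = (N₁ − v vᵀ)/ρ; equivalently, (M − VᵀU)(N₁ − v vᵀ) = ρ I_{n+2} and (N₁ − v vᵀ)(M − VᵀU) = ρ I_{n+2}. -/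
open Matrix

lemma A_entries (n : ℕ) (ρ : ℝ) (γ : Fin (n + 1) → ℝ) (hγ : ∀ i, 0 < γ i) :
    (∀ i j : Fin (n + 1), (Mmat n ρ γ - (Vmat n ρ γ)ᵀ * Umat n γ) i.castSucc j.castSucc
      = (if i = j then 1 / γ i else 0) - 1 / γ i) ∧
    (∀ i : Fin (n + 1), (Mmat n ρ γ - (Vmat n ρ γ)ᵀ * Umat n γ) i.castSucc (Fin.last _)
      = ρ / γ i) ∧
    (∀ j : Fin (n + 1), (Mmat n ρ γ - (Vmat n ρ γ)ᵀ * Umat n γ) (Fin.last _) j.castSucc = 1) ∧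
    (Mmat n ρ γ - (Vmat n ρ γ)ᵀ * Umat n γ) (Fin.last _) (Fin.last _) = -ρ := by
  have hle : ∀ i : Fin (n + 1), (i : ℕ) ≤ n := fun i => Nat.lt_succ_iff.mp i.isLt
  have hV : ∀ k i : Fin (n + 1), Vmat n ρ γ k i.castSucc = if k = i then ρ / γ k else 0 := by
    intro k i
    simp [Vmat, Fin.ext_iff]
  have hVl : ∀ k : Fin (n + 1), Vmat n ρ γ k (Fin.last _) = 0 := by
    intro k
    have := k.isLt
    simp only [Vmat, Fin.val_last]
    rw [if_neg (by omega)]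
  have hU : ∀ k i : Fin (n + 1), Umat n γ k i.castSucc = if k = i then γ k else 0 := by
    intro k i
    simp [Umat, Fin.ext_iff, (hle i).not_gt]
  have hUl : ∀ k : Fin (n + 1), Umat n γ k (Fin.last _) = 1 := by
    intro k
    simp [Umat]
  refine ⟨fun i j => ?_, fun i => ?_, fun j => ?_, ?_⟩
  · have := (hγ i).ne'
    rw [Matrix.sub_apply, Matrix.mul_apply]
    simp only [Matrix.transpose_apply, hV, hU, ite_mul, zero_mul, Finset.sum_ite_eq',
      Finset.mem_univ, if_true]
    by_cases h : i = j
    · subst h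
      simp [Mmat, hle]
      field_simp
      try simp
    · simp [Mmat, hle, h]
      try ring
  · rw [Matrix.sub_apply, Matrix.mul_apply]
    simp only [Matrix.transpose_apply, hV, hUl, ite_mul, zero_mul, Finset.sum_ite_eq',
      Finset.mem_univ, if_true]
    simp [Mmat, hle]
    ring
  · rw [Matrix.sub_apply, Matrix.mul_apply]
    simp [hVl, Mmat, hle, fun i => (hle i).not_gt]
  · rw [Matrix.sub_apply, Matrix.mul_apply]
    simp [hVl, Mmat, hle, fun i => (hle i).not_gt]

lemma AB_eq (n : ℕ) (ρ : ℝ) (γ : Fin (n + 1) → ℝ) (hγ : ∀ i, 0 < γ i) :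
    (Mmat n ρ γ - (Vmat n ρ γ)ᵀ * Umat n γ)
      * (N1mat n ρ γ - Matrix.vecMulVec (vvec n) (vvec n))
      = ρ • (1 : Matrix (Fin (n + 2)) (Fin (n + 2)) ℝ) := by
  obtain ⟨h1, h2, h3, h4⟩ := A_entries n ρ γ hγ
  have hle : ∀ i : Fin (n + 1), (i : ℕ) ≤ n := fun i => Nat.lt_succ_iff.mp i.isLt
  have b1 : ∀ i j : Fin (n + 1),
      (N1mat n ρ γ - Matrix.vecMulVec (vvec n) (vvec n)) i.castSucc j.castSucc
      = if i = j then ρ * γ i else 0 := by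
    intro i j
    simp [N1mat, hle, vvec, Matrix.vecMulVec_apply]
  have b2 : ∀ i : Fin (n + 1),
      (N1mat n ρ γ - Matrix.vecMulVec (vvec n) (vvec n)) i.castSucc (Fin.last _) = ρ := by
    intro i
    simp [N1mat, hle, vvec, Matrix.vecMulVec_apply]
  have b3 : ∀ i : Fin (n + 1),
      (N1mat n ρ γ - Matrix.vecMulVec (vvec n) (vvec n)) (Fin.last _) i.castSucc = γ i := by
    intro i
    simp [N1mat, hle, vvec, Matrix.vecMulVec_apply]
  have b4 : (N1mat n ρ γ - Matrix.vecMulVec (vvec n) (vvec n)) (Fin.last _) (Fin.last _)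
      = n := by
    simp [N1mat, hle, vvec, Matrix.vecMulVec_apply]
  ext i j
  rw [Matrix.mul_apply, Fin.sum_univ_castSucc, Matrix.smul_apply, Matrix.one_apply]
  refine Fin.lastCases ?_ (fun i => ?_) i <;> refine Fin.lastCases ?_ (fun j => ?_) j
  · simp only [h3, h4, b2, b4]
    simp
    ring
  · simp only [h3, h4, b1, b3]
    simp [(Fin.castSucc_lt_last j).ne']
    try ring
  · have := (hγ i).ne'
    simp only [h1, h2, b2, b4, sub_mul, Finset.sum_sub_distrib, ite_mul, zero_mul]
    simp [(Fin.castSucc_lt_last i).ne]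
    field_simp
    ring
  · have := (hγ i).ne'
    simp only [h1, h2, b1, b3, mul_ite, mul_zero, Finset.sum_ite_eq', Finset.mem_univ, if_true]
    by_cases h : i = j
    · subst h
      simp
      field_simp
    · simp [h]
      field_simp
      try ring

/-- `M − VᵀU` is invertible with inverse `(N₁ − v vᵀ)/ρ`:
`(M − VᵀU) · (N₁ − v vᵀ)/ρ = I` and `(N₁ − v vᵀ)/ρ · (M − VᵀU) = I`;
equivalently `(M − VᵀU)(N₁ − v vᵀ) = ρ I` and `(N₁ − v vᵀ)(M − VᵀU) = ρ I`. -/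
theorem M_sub_VtU_inverse (n : ℕ) (ρ : ℝ) (hρ : 0 < ρ)
    (γ : Fin (n + 1) → ℝ) (hγ : ∀ i, 0 < γ i) :
    (Mmat n ρ γ - (Vmat n ρ γ)ᵀ * Umat n γ)
          * ((1 / ρ) • (N1mat n ρ γ - Matrix.vecMulVec (vvec n) (vvec n))) = 1 ∧
      ((1 / ρ) • (N1mat n ρ γ - Matrix.vecMulVec (vvec n) (vvec n)))
          * (Mmat n ρ γ - (Vmat n ρ γ)ᵀ * Umat n γ) = 1 ∧
      (Mmat n ρ γ - (Vmat n ρ γ)ᵀ * Umat n γ)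
          * (N1mat n ρ γ - Matrix.vecMulVec (vvec n) (vvec n)) = ρ • (1 : Matrix (Fin (n + 2)) (Fin (n + 2)) ℝ) ∧
      (N1mat n ρ γ - Matrix.vecMulVec (vvec n) (vvec n))
          * (Mmat n ρ γ - (Vmat n ρ γ)ᵀ * Umat n γ) = ρ • (1 : Matrix (Fin (n + 2)) (Fin (n + 2)) ℝ) := by
  have h := AB_eq n ρ γ hγ
  have h1 : (Mmat n ρ γ - (Vmat n ρ γ)ᵀ * Umat n γ)
          * ((1 / ρ) • (N1mat n ρ γ - Matrix.vecMulVec (vvec n) (vvec n))) = 1 := by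
    rw [Matrix.mul_smul, h, smul_smul, one_div, inv_mul_cancel₀ hρ.ne', one_smul]
  have h2 := mul_eq_one_comm.mp h1
  refine ⟨h1, h2, h, ?_⟩
  rw [Matrix.smul_mul] at h2
  rw [← h2, smul_smul, mul_one_div_cancel hρ.ne', one_smul]
end

section
/- Let ρ > 0 and γ₀, …, γₙ > 0, and define the matrices M, N₁ ((n+2)×(n+2)) and U, V ((n+1)×(n+2)) as in the context. Then Vᵀ U (I_{n+2} + N₁) = M N₁. -/
open Matrix

section entries
variable (n : ℕ) (ρ : ℝ) (γ : Fin (n + 1) → ℝ) (i j : Fin (n + 1))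

lemma M_cc : Mmat n ρ γ i.castSucc j.castSucc = if i = j then ρ else -1 / γ i := by
  simp [Mmat, Fin.is_le]
lemma M_cl : Mmat n ρ γ i.castSucc (Fin.last _) = 2 * ρ / γ i := by simp [Mmat, Fin.is_le]
lemma M_lc : Mmat n ρ γ (Fin.last _) j.castSucc = 1 := by simp [Mmat, Fin.is_le]
lemma M_ll : Mmat n ρ γ (Fin.last _) (Fin.last _) = -ρ := by simp [Mmat, Fin.is_le]
lemma N_cc : N1mat n ρ γ i.castSucc j.castSucc = if i = j then ρ * γ i else 0 := by
  simp [N1mat, Fin.is_le]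
lemma N_cl : N1mat n ρ γ i.castSucc (Fin.last _) = ρ := by simp [N1mat, Fin.is_le]
lemma N_lc : N1mat n ρ γ (Fin.last _) j.castSucc = γ j := by simp [N1mat, Fin.is_le]
lemma N_ll : N1mat n ρ γ (Fin.last _) (Fin.last _) = n + 1 := by simp [N1mat, Fin.is_le]
lemma U_c : Umat n γ i j.castSucc = if i = j then γ i else 0 := by
  simp [Umat, Fin.is_le, Fin.ext_iff]
lemma U_l : Umat n γ i (Fin.last _) = 1 := by simp [Umat, Fin.is_le]
lemma V_c : Vmat n ρ γ i j.castSucc = if i = j then ρ / γ i else 0 := by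
  simp [Vmat, Fin.ext_iff]
lemma V_l : Vmat n ρ γ i (Fin.last _) = 0 := by
  have := i.isLt
  simp only [Vmat, Fin.val_last]
  rw [if_neg (by omega)]

lemma sum_off (a b : ℝ) :
    ∑ k : Fin (n + 1), (if i = k then a else b) = a + n * b := by
  have h : ∀ k : Fin (n + 1), (if i = k then a else b) = (if i = k then a - b else 0) + b := by
    intro k; split_ifs <;> ring
  simp_rw [h, Finset.sum_add_distrib]
  simp
  ring
end entries

/-- `Vᵀ U (I_{n+2} + N₁) = M N₁`. -/
theorem VtU_identity (n : ℕ) (ρ : ℝ) (hρ : 0 < ρ)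
    (γ : Fin (n + 1) → ℝ) (hγ : ∀ i, 0 < γ i) :
    (Vmat n ρ γ)ᵀ * Umat n γ * (1 + N1mat n ρ γ) = Mmat n ρ γ * N1mat n ρ γ := by
  ext i j
  have hne : ∀ i, γ i ≠ 0 := fun i => (hγ i).ne'
  induction i using Fin.lastCases with
  | last =>
    induction j using Fin.lastCases with
    | last =>
      simp [Matrix.mul_apply, Fin.sum_univ_castSucc (n := n + 1), V_l, M_lc, M_ll, N_cl, N_ll]
      ring
    | cast j =>
      simp [Matrix.mul_apply, Fin.sum_univ_castSucc (n := n + 1), V_l, M_lc, M_ll, N_cc, N_lc]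
  | cast i =>
    have hi := hne i
    induction j using Fin.lastCases with
    | last =>
      simp [Matrix.mul_apply, Fin.sum_univ_castSucc (n := n + 1), V_c, U_c, U_l, M_cc, M_cl, N_cl, N_ll,
        Matrix.one_apply, ite_mul, sum_off, (Fin.castSucc_lt_last _).ne]
      field_simp
      ring
    | cast j =>
      simp [Matrix.mul_apply, Fin.sum_univ_castSucc (n := n + 1), V_c, U_c, U_l, M_cc, M_cl, N_cc, N_lc,
        Matrix.one_apply, (Fin.castSucc_lt_last _).ne, (Fin.castSucc_lt_last _).ne']
      by_cases h : i = j
      · subst h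
        simp
        field_simp
        ring
      · simp [h]
        field_simp
        ring
end

section
/- Let T > 0, ρ > 0, γ₀, …, γₙ > 0 and x ∈ ℝ^{n+1}. Call ψ = (α₀, …, αₙ, S) : [0,T] → ℝ^{n+2} regular if each α_i is continuous with ∫₀^T α_i(t) dt = x_i and S(t) = ∫₀^t e^{−ρ(t−s)} Σ_{j=0}^n α_j(s) ds for all t. Then a regular ψ satisfies the equilibrium conditions — i.e., there exists η ∈ ℝ^{n+1} with γ_i α_i(t) + S(t) + ∫_t^T e^{ρ(t−s)} α_i(s) ds = η_i for all t ∈ [0,T] and all i — if and only if ψ is continuously differentiable and solves the linear system dψ/dt (t) = M ψ(t) − Vᵀ (U ψ(T)) for all t ∈ [0,T], where M, U, V are the matrices defined in the context. -/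
open Matrix

open MeasureTheory


lemma aux_base (T : ℝ) (hT : 0 < T) (f : ℝ → ℝ) (hf : ContinuousOn f (Set.Icc 0 T))
    (t : ℝ) (ht : t ∈ Set.Icc (0:ℝ) T) :
    HasDerivWithinAt (fun u => ∫ s in (0:ℝ)..u, f s) (f t) (Set.Icc 0 T) t := by
  set g : ℝ → ℝ := Set.IccExtend hT.le (Set.domRestrict (Set.Icc 0 T) f) with hg
  have hgc : Continuous g := (continuousOn_iff_continuous_domRestrict.mp hf).Icc_extend'
  have hgf : ∀ s ∈ Set.Icc (0:ℝ) T, g s = f s := by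
    intro s hs
    rw [hg, Set.IccExtend_of_mem _ _ hs]; rfl
  have h1 : HasDerivAt (fun u => ∫ s in (0:ℝ)..u, g s) (g t) t :=
    intervalIntegral.integral_hasDerivAt_right (hgc.intervalIntegrable _ _)
      (hgc.stronglyMeasurableAtFilter _ _) hgc.continuousAt
  have key : ∀ u ∈ Set.Icc (0:ℝ) T, (∫ s in (0:ℝ)..u, f s) = ∫ s in (0:ℝ)..u, g s := by
    intro u hu
    apply intervalIntegral.integral_congr
    intro s hs
    rw [Set.uIcc_of_le hu.1] at hs
    exact (hgf s ⟨hs.1, hs.2.trans hu.2⟩).symm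
  rw [← hgf t ht]
  exact h1.hasDerivWithinAt.congr key (key t ht)

lemma aux_fwd (T : ℝ) (hT : 0 < T) (ρ : ℝ) (f : ℝ → ℝ) (hf : ContinuousOn f (Set.Icc 0 T))
    (t : ℝ) (ht : t ∈ Set.Icc (0:ℝ) T) :
    HasDerivWithinAt (fun u => ∫ s in (0:ℝ)..u, Real.exp (-ρ * (u - s)) * f s)
      (f t - ρ * ∫ s in (0:ℝ)..t, Real.exp (-ρ * (t - s)) * f s) (Set.Icc 0 T) t := by
  have e : ∀ u, (∫ s in (0:ℝ)..u, Real.exp (-ρ * (u - s)) * f s)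
      = Real.exp (-ρ * u) * ∫ s in (0:ℝ)..u, Real.exp (ρ * s) * f s := by
    intro u
    rw [← intervalIntegral.integral_const_mul]
    congr 1; ext s
    rw [← mul_assoc, ← Real.exp_add]; congr 2; ring
  simp only [e]
  have h1 := aux_base T hT (fun s => Real.exp (ρ * s) * f s)
    ((by fun_prop : Continuous fun s => Real.exp (ρ * s)).continuousOn.mul hf) t ht
  have h2 : HasDerivWithinAt (fun u => Real.exp (-ρ * u)) (Real.exp (-ρ * t) * (-ρ * 1))
      (Set.Icc 0 T) t := (((hasDerivAt_id t).const_mul (-ρ)).exp).hasDerivWithinAt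
  have h3 := h2.mul h1
  have h4 : Real.exp (-ρ * t) * Real.exp (ρ * t) = 1 := by
    rw [← Real.exp_add]; simp
  refine h3.congr_deriv ?_
  linear_combination f t * h4

lemma aux_bwd (T : ℝ) (hT : 0 < T) (ρ : ℝ) (f : ℝ → ℝ) (hf : ContinuousOn f (Set.Icc 0 T))
    (t : ℝ) (ht : t ∈ Set.Icc (0:ℝ) T) :
    HasDerivWithinAt (fun u => ∫ s in u..T, Real.exp (ρ * (u - s)) * f s)
      (ρ * (∫ s in t..T, Real.exp (ρ * (t - s)) * f s) - f t) (Set.Icc 0 T) t := by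
  have hc : ContinuousOn (fun s => Real.exp (-ρ * s) * f s) (Set.Icc 0 T) :=
    (by fun_prop : Continuous fun s => Real.exp (-ρ * s)).continuousOn.mul hf
  have e : ∀ u ∈ Set.Icc (0:ℝ) T, (∫ s in u..T, Real.exp (ρ * (u - s)) * f s)
      = Real.exp (ρ * u) * ((∫ s in (0:ℝ)..T, Real.exp (-ρ * s) * f s)
        - ∫ s in (0:ℝ)..u, Real.exp (-ρ * s) * f s) := by
    intro u hu
    rw [intervalIntegral.integral_interval_sub_left, ← intervalIntegral.integral_const_mul]
    · congr 1; ext s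
      rw [← mul_assoc, ← Real.exp_add]; congr 2; ring
    · exact ContinuousOn.intervalIntegrable_of_Icc hT.le hc
    · exact ContinuousOn.intervalIntegrable_of_Icc hu.1
        (hc.mono (Set.Icc_subset_Icc_right hu.2))
  have h1 := aux_base T hT _ hc t ht
  have h2 : HasDerivWithinAt (fun u => Real.exp (ρ * u)) (Real.exp (ρ * t) * (ρ * 1))
      (Set.Icc 0 T) t := (((hasDerivAt_id t).const_mul ρ).exp).hasDerivWithinAt
  have h3 := h2.mul (h1.const_sub (∫ s in (0:ℝ)..T, Real.exp (-ρ * s) * f s))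
  have h4 : Real.exp (ρ * t) * Real.exp (-ρ * t) = 1 := by
    rw [← Real.exp_add]; simp
  refine (h3.congr e (e t ht)).congr_deriv ?_
  rw [e t ht]
  linear_combination (-f t) * h4

lemma aux_M_last (n : ℕ) (ρ : ℝ) (γ : Fin (n + 1) → ℝ) (p q : Fin (n + 2) → ℝ) :
    (Matrix.mulVec (Mmat n ρ γ) p
      - Matrix.mulVec (Vmat n ρ γ)ᵀ (Matrix.mulVec (Umat n γ) q)) (Fin.last (n + 1))
    = (∑ j : Fin (n + 1), p j.castSucc) - ρ * p (Fin.last (n + 1)) := by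
  have hle : ∀ j : Fin (n + 1), (j : ℕ) ≤ n := fun j => Nat.lt_succ_iff.mp j.2
  have hV : ∀ i : Fin (n + 1), Vmat n ρ γ i (Fin.last (n + 1)) = 0 := by
    intro i
    have := i.2
    simp only [Vmat, Fin.val_last]
    rw [if_neg (by omega)]
  rw [Pi.sub_apply]
  simp only [Matrix.mulVec, dotProduct, Matrix.transpose_apply, hV, zero_mul,
    Finset.sum_const_zero]
  rw [Fin.sum_univ_castSucc]
  simp [Mmat, hle]
  ring

lemma aux_M_cast (n : ℕ) (ρ : ℝ) (γ : Fin (n + 1) → ℝ) (p q : Fin (n + 2) → ℝ)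
    (i : Fin (n + 1)) :
    (Matrix.mulVec (Mmat n ρ γ) p
      - Matrix.mulVec (Vmat n ρ γ)ᵀ (Matrix.mulVec (Umat n γ) q)) i.castSucc
    = (ρ * p i.castSucc - 1 / γ i * ((∑ j : Fin (n + 1), p j.castSucc) - p i.castSucc)
        + 2 * ρ / γ i * p (Fin.last (n + 1)))
      - ρ / γ i * (γ i * q i.castSucc + q (Fin.last (n + 1))) := by
  have hle : ∀ j : Fin (n + 1), (j : ℕ) ≤ n := fun j => Nat.lt_succ_iff.mp j.2
  have hV : ∀ j : Fin (n + 1), Vmat n ρ γ j i.castSucc = if j = i then ρ / γ i else 0 := by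
    intro j
    by_cases h : j = i
    · simp [Vmat, h]
    · simp [Vmat, h, Fin.val_inj]
  have hU : Matrix.mulVec (Umat n γ) q i = γ i * q i.castSucc + q (Fin.last (n + 1)) := by
    simp only [Matrix.mulVec, dotProduct]
    rw [Fin.sum_univ_castSucc]
    simp [Umat, Fin.val_inj, hle]
  have hM : Matrix.mulVec (Mmat n ρ γ) p i.castSucc
      = ρ * p i.castSucc - 1 / γ i * ((∑ j : Fin (n + 1), p j.castSucc) - p i.castSucc)
        + 2 * ρ / γ i * p (Fin.last (n + 1)) := by
    simp only [Matrix.mulVec, dotProduct]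
    rw [Fin.sum_univ_castSucc]
    have h1 : ∀ j : Fin (n + 1), Mmat n ρ γ i.castSucc j.castSucc * p j.castSucc
        = -(1 / γ i) * p j.castSucc + if i = j then (ρ + 1 / γ i) * p j.castSucc else 0 := by
      intro j
      by_cases h : i = j
      · subst h; simp [Mmat, hle]; ring
      · simp [Mmat, h, hle]; ring
    simp only [h1]
    rw [Finset.sum_add_distrib, ← Finset.mul_sum]
    simp [Mmat, hle]
    ring
  rw [Pi.sub_apply, hM]
  congr 1
  rw [← hU]
  simp only [Matrix.mulVec_eq_sum, Matrix.transpose_transpose]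
  simp [Finset.sum_apply, hV]

lemma aux_const (T : ℝ) (f : ℝ → ℝ)
    (h : ∀ t ∈ Set.Icc (0:ℝ) T, HasDerivWithinAt f 0 (Set.Icc 0 T) t)
    (t : ℝ) (ht : t ∈ Set.Icc (0:ℝ) T) : f t = f T := by
  have hT : T ∈ Set.Icc (0:ℝ) T := ⟨ht.1.trans ht.2, le_rfl⟩
  have := (convex_Icc (0:ℝ) T).norm_image_sub_le_of_norm_hasDerivWithin_le (C := 0)
    h (fun x _ => by simp) ht hT
  simp at this
  linarith [sub_eq_zero.mp this]

/-- For a regular `ψ = (α₀, …, αₙ, S)` (each `α_i` continuous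
on `[0,T]` with `∫₀ᵀ α_i = x_i`, and `S(t) = ∫₀ᵗ e^{−ρ(t−s)} Σⱼ αⱼ(s) ds`), the
equilibrium conditions — existence of `η` with
`γ_i α_i(t) + S(t) + ∫ₜᵀ e^{ρ(t−s)} α_i(s) ds = η_i` on `[0,T]` — hold if and
only if `ψ` is continuously differentiable on `[0,T]` and solves
`dψ/dt = Mψ − Vᵀ(Uψ(T))` there. -/
theorem regular_equilibrium_iff_linear_ode
    (n : ℕ) (T : ℝ) (hT : 0 < T) (ρ : ℝ) (hρ : 0 < ρ)
    (γ : Fin (n + 1) → ℝ) (hγ : ∀ i, 0 < γ i)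
    (x : Fin (n + 1) → ℝ)
    (ψ : ℝ → Fin (n + 2) → ℝ)
    (hreg_cont : ∀ i : Fin (n + 1),
      ContinuousOn (fun t => ψ t i.castSucc) (Set.Icc 0 T))
    (hreg_constraint : ∀ i : Fin (n + 1), (∫ t in (0:ℝ)..T, ψ t i.castSucc) = x i)
    (hreg_price : ∀ t ∈ Set.Icc (0 : ℝ) T,
      ψ t (Fin.last (n + 1))
        = ∫ s in (0:ℝ)..t,
            Real.exp (-ρ * (t - s)) * ∑ j : Fin (n + 1), ψ s j.castSucc) :
    (∃ η : Fin (n + 1) → ℝ, ∀ t ∈ Set.Icc (0 : ℝ) T, ∀ i : Fin (n + 1),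
        γ i * ψ t i.castSucc + ψ t (Fin.last (n + 1))
            + (∫ s in t..T, Real.exp (ρ * (t - s)) * ψ s i.castSucc) = η i)
      ↔ ((∀ k : Fin (n + 2), ContDiffOn ℝ 1 (fun t => ψ t k) (Set.Icc 0 T)) ∧
          ∀ t ∈ Set.Icc (0 : ℝ) T, ∀ k : Fin (n + 2),
            HasDerivWithinAt (fun t => ψ t k)
              ((Matrix.mulVec (Mmat n ρ γ) (ψ t)
                  - Matrix.mulVec (Vmat n ρ γ)ᵀ
                      (Matrix.mulVec (Umat n γ) (ψ T))) k)
              (Set.Icc 0 T) t) := by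
  have hS : ∀ t ∈ Set.Icc (0:ℝ) T, HasDerivWithinAt (fun t => ψ t (Fin.last (n + 1)))
      ((∑ j : Fin (n + 1), ψ t j.castSucc) - ρ * ψ t (Fin.last (n + 1))) (Set.Icc 0 T) t := by
    intro t ht
    have hc : ContinuousOn (fun s => ∑ j : Fin (n + 1), ψ s j.castSucc) (Set.Icc 0 T) :=
      continuousOn_finsetSum _ fun i _ => hreg_cont i
    have h := (aux_fwd T hT ρ _ hc t ht).congr hreg_price (hreg_price t ht)
    rwa [← hreg_price t ht] at h
  have hI := fun i => aux_bwd T hT ρ _ (hreg_cont i)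
  have hTm : T ∈ Set.Icc (0:ℝ) T := ⟨hT.le, le_rfl⟩
  constructor
  · rintro ⟨η, hη⟩
    have hηT : ∀ i, η i = γ i * ψ T i.castSucc + ψ T (Fin.last (n + 1)) := by
      intro i
      rw [← hη T hTm i]; simp
    have hD : ∀ t ∈ Set.Icc (0 : ℝ) T, ∀ k : Fin (n + 2),
            HasDerivWithinAt (fun t => ψ t k)
              ((Matrix.mulVec (Mmat n ρ γ) (ψ t)
                  - Matrix.mulVec (Vmat n ρ γ)ᵀ
                      (Matrix.mulVec (Umat n γ) (ψ T))) k)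
              (Set.Icc 0 T) t := by
      intro t ht k
      refine Fin.lastCases ?_ (fun i => ?_) k
      · rw [aux_M_last]; exact hS t ht
      · rw [aux_M_cast, ← hηT]
        have hg := (hγ i).ne'
        have e : ∀ u ∈ Set.Icc (0:ℝ) T, ψ u i.castSucc = (1 / γ i) * (η i - ψ u (Fin.last (n + 1))
            - ∫ s in u..T, Real.exp (ρ * (u - s)) * ψ s i.castSucc) := by
          intro u hu
          rw [← hη u hu i]; field_simp; ring
        have h := ((((hS t ht).const_sub (η i)).sub (hI i t ht)).const_mul (1 / γ i)).congr
          e (e t ht)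
        refine h.congr_deriv ?_
        rw [← hη t ht i]
        field_simp
        ring
    refine ⟨fun k => ?_, hD⟩
    have hcont : ∀ k, ContinuousOn (fun t => ψ t k) (Set.Icc 0 T) :=
      fun k t ht => (hD t ht k).continuousWithinAt
    have hu := uniqueDiffOn_Icc hT
    rw [show (1 : WithTop ℕ∞) = 0 + 1 from (zero_add 1).symm,
      contDiffOn_succ_iff_derivWithin hu]
    refine ⟨fun t ht => (hD t ht k).differentiableWithinAt, by simp, ?_⟩
    rw [contDiffOn_zero]
    refine ContinuousOn.congr ?_ (fun t ht => (hD t ht k).derivWithin (hu t ht))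
    simp only [Pi.sub_apply, Matrix.mulVec, dotProduct]
    exact (continuousOn_finsetSum _ fun j _ => continuousOn_const.mul (hcont j)).sub
      continuousOn_const
  · rintro ⟨-, hD⟩
    refine ⟨fun i => γ i * ψ T i.castSucc + ψ T (Fin.last (n + 1)), fun t ht i => ?_⟩
    have hg := (hγ i).ne'
    set c := γ i * ψ T i.castSucc + ψ T (Fin.last (n + 1)) with hc
    have key := aux_const T (fun u => Real.exp (-ρ * u) * (γ i * ψ u i.castSucc
      + ψ u (Fin.last (n + 1))
      + (∫ s in u..T, Real.exp (ρ * (u - s)) * ψ s i.castSucc) - c)) (by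
        intro u hu
        have h1 := hD u hu i.castSucc
        rw [aux_M_cast, ← hc] at h1
        have h2 : HasDerivWithinAt (fun u => Real.exp (-ρ * u)) (Real.exp (-ρ * u) * (-ρ * 1))
          (Set.Icc 0 T) u := (((hasDerivAt_id u).const_mul (-ρ)).exp).hasDerivWithinAt
        have h3 := h2.mul ((((h1.const_mul (γ i)).add (hS u hu)).add (hI i u hu)).sub_const c)
        refine h3.congr_deriv ?_
        simp only [Pi.add_apply]
        field_simp
        ring) t ht
    simp only [intervalIntegral.integral_same, add_zero, ← hc, sub_self, mul_zero] at key
    rcases mul_eq_zero.mp key with h | h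
    · exact absurd h (Real.exp_ne_zero _)
    · exact sub_eq_zero.mp h
end
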